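/- Let n ≥ 1, λ ∈ ℂ with 0 < ‖λ‖ < 1, X = (ℂⁿ \ {0}) / ℤ the quotient by m • z = λ^m z, and p : X → ℙ^{n−1}(ℂ) the induced projection. Then for every point of ℙ^{n−1}(ℂ), the fiber of p over that point is homeomorphic to the quotient topological group ℂˣ / ⟨λ⟩, where ⟨λ⟩ is the subgroup of ℂˣ generated by λ (the group of integer powers of λ). -/

import Mathlib

/-!
The fiber over `[v]` is the image of the punctured line `ℂˣ • v`, so `u ↦ [u • v]` is a
continuous surjection from `ℂˣ` onto the fiber, and two units have the same image exactly when
they differ by a power of `l`. It remains to see that this surjection is open.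
The quotient map `ℂⁿ \ {0} → X` is open, because
the saturation of an open set is the union of its translates by the homeomorphisms `l ^ m • ·`
(`isOpenMap_hopfMk`). If `v i ≠ 0`, the coordinate ratio `z i / v i` recovers `u` from `z = u • v`,
and it is continuous on all of `ℂⁿ \ {0}`. Hence the image of an open
`U ⊆ ℂˣ` is the trace on the fiber of the open image in `X` of `{z | z i / v i ∈ U}`.
The induced bijection `ℂˣ ⧸ ⟨l⟩ → p ⁻¹' {[v]}` is therefore continuous and open.
-/

/-- The quotient topology on the projectivization `ℙ K V`, coinduced by the
quotient map `{v // v ≠ 0} → ℙ K V`. -/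
instance Projectivization.instTopologicalSpace
    {K V : Type*} [DivisionRing K] [AddCommGroup V] [Module K V]
    [TopologicalSpace V] : TopologicalSpace (Projectivization K V) :=
  TopologicalSpace.coinduced (Projectivization.mk' K) inferInstance

/-- The orbit relation of the `ℤ`-action `m • z = l ^ m z` on `ℂⁿ \ {0}`. -/
abbrev hopfRel (n : ℕ) (l : ℂ) (z w : {z : Fin n → ℂ // z ≠ 0}) : Prop :=
  ∃ m : ℤ, l ^ m • (z : Fin n → ℂ) = (w : Fin n → ℂ)

theorem hopfRel_equivalence {n : ℕ} {l : ℂ} (hl : l ≠ 0) : Equivalence (hopfRel n l) where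
  refl z := ⟨0, by simp⟩
  symm := by
    rintro z w ⟨m, hm⟩
    exact ⟨-m, by rw [← hm, smul_smul, ← zpow_add₀ hl]; simp⟩
  trans := by
    rintro z w y ⟨m, hm⟩ ⟨k, hk⟩
    exact ⟨k + m, by rw [← hk, ← hm, smul_smul, ← zpow_add₀ hl]⟩

theorem hopfMk_eq_iff {n : ℕ} {l : ℂ} (hl : l ≠ 0) (z w : {z : Fin n → ℂ // z ≠ 0}) :
    Quot.mk (hopfRel n l) z = Quot.mk (hopfRel n l) w ↔ hopfRel n l z w :=
  ⟨fun h => (hopfRel_equivalence hl).eqvGen_iff.mp (Quot.eqvGen_exact h), fun h => Quot.sound h⟩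

theorem isOpenMap_hopfMk {n : ℕ} {l : ℂ} (hl : l ≠ 0) : IsOpenMap (Quot.mk (hopfRel n l)) := by
  intro O hO
  rw [← isQuotientMap_quot_mk.isOpen_preimage]
  have hne (m : ℤ) (z : {z : Fin n → ℂ // z ≠ 0}) : l ^ m • (z : Fin n → ℂ) ≠ 0 :=
    smul_ne_zero (zpow_ne_zero m hl) z.2
  have hsat : Quot.mk (hopfRel n l) ⁻¹' (Quot.mk (hopfRel n l) '' O) =
      ⋃ m : ℤ, (fun z : {z : Fin n → ℂ // z ≠ 0} =>
        (⟨l ^ m • (z : Fin n → ℂ), hne m z⟩ : {z : Fin n → ℂ // z ≠ 0})) ⁻¹' O := by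
    ext z
    simp only [Set.mem_preimage, Set.mem_image, Set.mem_iUnion]
    constructor
    · rintro ⟨w, hw, h⟩
      obtain ⟨m, hm⟩ := (hopfMk_eq_iff hl z w).mp h.symm
      exact ⟨m, by convert hw⟩
    · rintro ⟨m, hm⟩
      exact ⟨_, hm, ((hopfMk_eq_iff hl _ _).mpr ⟨m, rfl⟩).symm⟩
  rw [hsat]
  refine isOpen_iUnion fun m => hO.preimage ?_
  exact (continuous_subtype_val.const_smul (l ^ m)).subtype_mk _

/-- for the Hopf quotient `X = (ℂⁿ \ {0}) / ℤ` (action `m • z = λ^m z`,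
`0 < ‖λ‖ < 1`) and the induced projection `p : X → ℙ^{n-1}(ℂ)`, every fiber of `p`
is homeomorphic to the quotient topological group `ℂˣ / ⟨λ⟩`. -/
theorem hopf_fibration_fiber_homeomorphic
    (n : ℕ) (hn : 1 ≤ n) (l : ℂ) (h0 : 0 < ‖l‖) (h1 : ‖l‖ < 1)
    (p : (Quot fun z w : {z : Fin n → ℂ // z ≠ 0} =>
            ∃ m : ℤ, l ^ m • (z : Fin n → ℂ) = (w : Fin n → ℂ)) →
          Projectivization ℂ (Fin n → ℂ))
    (hp : ∀ z : {z : Fin n → ℂ // z ≠ 0},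
        p (Quot.mk _ z) = Projectivization.mk ℂ (z : Fin n → ℂ) z.prop)
    (pt : Projectivization ℂ (Fin n → ℂ)) :
    Nonempty ((p ⁻¹' {pt}) ≃ₜ
      (ℂˣ ⧸ Subgroup.zpowers (Units.mk0 l (norm_pos_iff.mp h0)))) := by
  have hl : l ≠ 0 := norm_pos_iff.mp h0
  induction pt using Projectivization.ind with | h v hv =>
  obtain ⟨i, hi⟩ : ∃ i, v i ≠ 0 := Function.ne_iff.mp hv
  let s : ℂˣ → {z : Fin n → ℂ // z ≠ 0} := fun u => ⟨(u : ℂ) • v, smul_ne_zero u.ne_zero hv⟩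
  have hs : Continuous s := (Units.continuous_val.smul continuous_const).subtype_mk _
  have hfib (z : {z : Fin n → ℂ // z ≠ 0}) :
      p (Quot.mk _ z) = Projectivization.mk ℂ v hv ↔ ∃ u : ℂˣ, s u = z := by
    rw [hp, Projectivization.mk_eq_mk_iff]
    simp only [s, Subtype.ext_iff, Units.smul_def]
  let g : ℂˣ → p ⁻¹' {Projectivization.mk ℂ v hv} :=
    fun u => ⟨Quot.mk _ (s u), (hfib _).mpr ⟨u, rfl⟩⟩
  have hgc : Continuous g := (continuous_quot_mk.comp hs).subtype_mk _
  have hgs : Function.Surjective g := by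
    rintro ⟨⟨z⟩, hz⟩
    obtain ⟨u, rfl⟩ := (hfib z).mp hz
    exact ⟨u, rfl⟩
  have hgo : IsOpenMap g := by
    intro U hU
    -- The open set of points whose `i`-th coordinate ratio to `v` is a unit lying in `U`.
    let O : Set {z : Fin n → ℂ // z ≠ 0} := (fun z => z.1 i / v i) ⁻¹' (Units.val '' U)
    have hO : IsOpen O := by
      refine (Units.isOpenEmbedding_val.isOpenMap U hU).preimage ?_
      exact ((continuous_apply i).comp continuous_subtype_val).div_const _
    have hsO (u : ℂˣ) : s u ∈ O ↔ u ∈ U := by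
      have : (s u).1 i / v i = u := by simp [s, hi]
      simp only [O, Set.mem_preimage, this, Units.val_injective.mem_set_image]
    refine ⟨Quot.mk (hopfRel n l) '' O, isOpenMap_hopfMk hl O hO, ?_⟩
    ext x
    constructor
    · obtain ⟨x, hx⟩ := x
      rintro ⟨z, hz, rfl⟩
      obtain ⟨u, rfl⟩ := (hfib z).mp hx
      exact ⟨u, (hsO u).mp hz, rfl⟩
    · rintro ⟨u, hu, rfl⟩
      exact ⟨s u, (hsO u).mpr hu, rfl⟩
  have hker (a b : ℂˣ) : g a = g b ↔
      QuotientGroup.leftRel (Subgroup.zpowers (Units.mk0 l (norm_pos_iff.mp h0))) a b := by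
    rw [QuotientGroup.leftRel_apply, Subtype.ext_iff, hopfMk_eq_iff hl, Subgroup.mem_zpowers_iff]
    refine exists_congr fun m => ?_
    rw [eq_inv_mul_iff_mul_eq, mul_comm, Units.ext_iff]
    simp only [s, smul_smul, (smul_left_injective ℂ hv).eq_iff]
    simp
  let e : (ℂˣ ⧸ Subgroup.zpowers (Units.mk0 l (norm_pos_iff.mp h0))) →
      p ⁻¹' {Projectivization.mk ℂ v hv} := Quotient.lift g fun a b h => (hker a b).mpr h
  have he : Function.Bijective e := by
    constructor
    · rintro ⟨a⟩ ⟨b⟩ h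
      exact Quotient.sound ((hker a b).mp h)
    · exact Quotient.lift_surjective g _ hgs
  have hec : Continuous e := hgc.quotient_lift _
  have heo : IsOpenMap e := by
    intro V hV
    have : e '' V = g '' (QuotientGroup.mk ⁻¹' V) := by
      conv_lhs => rw [← Set.image_preimage_eq V QuotientGroup.mk_surjective, Set.image_image]
      rfl
    rw [this]
    exact hgo _ (hV.preimage QuotientGroup.continuous_mk)
  exact ⟨((Equiv.ofBijective e he).toHomeomorphOfContinuousOpen hec heo).symm⟩
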